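/- arXiv:2504.15058 — 2 statements merged into one kernel-verified Lean document; each statement's English description precedes it below -/
import Mathlib

section
/- Let n ≥ 3, α ∈ (0,π/2), ρ > 0, and let p = ρa and q = −p (a ∈ S^{n−1}) be antipodal points of the standard cone C_α^n. Let L^T_{p,q} := ⋃_{ξ ∈ S^{n−2}_G} L_ξ([0,1]) ⊂ ℝ^n be the union of the images of all length-minimising geodesic segments of C_α^n from p to q, equipped with the Euclidean subspace topology. Then L^T_{p,q} is homeomorphic to the sphere S^{n−1}; in particular the apex o belongs to the bounded component of ℝ^n \ L^T_{p,q}. -/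
/-!
Put `s = sin α ∈ (0, 1)`. Sending the point at distance `r` from the apex and at angle `θ` from
the axis `a` to the complex number of modulus `r` and argument `s (θ - π / 2)` defines the
development `develop s a : ℝⁿ → ℂ`. On each half-plane bounded by `ℝ a` it is an isometry for the
cone metric, and globally it contracts: `‖develop y - develop x‖ ≤ coneDist x y`
(`norm_develop_sub_le_coneDist`). The contraction is proved along a `C¹` path by comparing the
right difference quotients of the developed path with the right limits of the speed; off the apex
it rests on the triangle inequality for angles (`norm_develop_sub_sq_le`), and at the apex both
sides are the Euclidean speed.

The points `p = ρ a` and `q = -ρ a` develop to `m ∓ i h` with `m = ρ cos (s π / 2) > 0`, and in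
each half-plane the segment between these lifts to an explicit curve (`meridian`) whose length
equals the distance of the developed endpoints. Contraction makes these curves minimising
(`coneDist_meridian`), and the strict triangle inequality in `ℂ` forces every minimising segment
to develop into the line `re = m`. Hence the union of the minimising segments is exactly the
level set `{z | re (develop z) = m}` (`iUnion_minSeg_eq`).

The function `re ∘ develop` is continuous, positively homogeneous of degree one and at least
`‖z‖ cos (s π / 2)`, so this level set is a radial graph over the unit sphere; and by the
intermediate value theorem the component of the apex in its complement stays in the
ball of radius `ρ`.
-/

open scoped RealInnerProductSpace
open Real Set Filter

noncomputable section

/-- Euclidean `n`-space. -/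
abbrev En (n : ℕ) : Type := EuclideanSpace ℝ (Fin n)

/-- A (pointwise) metric tensor on `ℝⁿ`: to each point it assigns a bilinear form,
recorded simply as an `ℝ`-valued function of two tangent vectors (tangent spaces being
identified with `ℝⁿ`). -/
abbrev MetricTensor (n : ℕ) : Type := En n → En n → En n → ℝ

/-- The standard cone metric `g_{C_α^n}` of opening angle `α`, written in Cartesian
coordinates on `ℝⁿ \ {0}`:  `g_{C_α^n} = (1 - sin²α)·dρ⊗dρ + sin²α·(euclidean metric)`,
where `dρ(v) = ⟪v, x/‖x‖⟫`; this is `dρ⊗dρ + ρ² sin²α · g_{S^{n-1}}` in polar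
coordinates. -/
def coneMetric (n : ℕ) (α : ℝ) : MetricTensor n := fun x v w =>
  (1 - Real.sin α ^ 2) * (⟪v, x⟫ * ⟪w, x⟫ / ‖x‖ ^ 2) + Real.sin α ^ 2 * ⟪v, w⟫

variable {n : ℕ}

/-- Length of a curve on `[a,b]` with respect to a metric tensor. -/
def clen (G : MetricTensor n) (γ : ℝ → En n) (a b : ℝ) : ℝ :=
  ∫ t in a..b, Real.sqrt (G (γ t) (deriv γ t) (deriv γ t))

/-- Energy of a curve on `[a,b]` with respect to a metric tensor. -/
def cenergy (G : MetricTensor n) (γ : ℝ → En n) (a b : ℝ) : ℝ :=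
  ∫ t in a..b, G (γ t) (deriv γ t) (deriv γ t)

/-- The Riemannian (length) distance induced by a metric tensor:
the infimum of lengths of `C¹` curves joining the two points. -/
def rdist (G : MetricTensor n) (x y : En n) : ℝ :=
  sInf {L : ℝ | ∃ γ : ℝ → En n, ContDiff ℝ 1 γ ∧ γ 0 = x ∧ γ 1 = y ∧ L = clen G γ 0 1}

/-- The intrinsic (induced length) distance of the subset `S` for the metric tensor `G`:
the infimum of lengths of `C¹` curves joining the two points inside `S`. -/
def rdistIn (G : MetricTensor n) (S : Set (En n)) (x y : En n) : ℝ :=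
  sInf {L : ℝ | ∃ γ : ℝ → En n, ContDiff ℝ 1 γ ∧ (∀ t ∈ Set.Icc (0:ℝ) 1, γ t ∈ S) ∧
    γ 0 = x ∧ γ 1 = y ∧ L = clen G γ 0 1}

/-- `γ`, restricted to the parameter set `I`, is a geodesic of the distance `d` with
constant speed `c`: locally it is a homothety of factor `c` (for `c = 1` this is a local
isometry, i.e. the arc-length parametrisation). -/
def IsGeodesicOn (d : En n → En n → ℝ) (γ : ℝ → En n) (c : ℝ) (I : Set ℝ) : Prop :=
  ∀ t ∈ I, ∃ δ > 0, ∀ s ∈ I, ∀ u ∈ I, |s - t| < δ → |u - t| < δ →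
    d (γ s) (γ u) = c * |s - u|

/-- A length-minimising geodesic segment from `p` to `q`, parametrised on `[0,1]`
with constant speed `d p q`. -/
def IsMinSeg (d : En n → En n → ℝ) (γ : ℝ → En n) (p q : En n) : Prop :=
  γ 0 = p ∧ γ 1 = q ∧
    ∀ s ∈ Set.Icc (0:ℝ) 1, ∀ u ∈ Set.Icc (0:ℝ) 1, d (γ s) (γ u) = d p q * |s - u|

/-- The distance of the standard cone `C_α^n`. -/
def coneDist (n : ℕ) (α : ℝ) : En n → En n → ℝ := rdist (coneMetric n α)

/-- `(ℝⁿ, g)` is an asymptotically conical `C²` Riemannian manifold with opening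
angle `α` and asymptotic decay rate `μ`: `g` is a complete `C²` Riemannian metric and
`A := g - g_{C_α^n}` has components whose derivatives of order `k ≤ 2` are
`O(|x|^{-μ-k})` at infinity. -/
structure IsAsympConical (n : ℕ) (g : MetricTensor n) (α μ : ℝ) : Prop where
  symm : ∀ x v w, g x v w = g x w v
  add_left : ∀ x v w u, g x (v + w) u = g x v u + g x w u
  smul_left : ∀ x (a : ℝ) v u, g x (a • v) u = a * g x v u
  posdef : ∀ x v, v ≠ 0 → 0 < g x v v
  reg : ∀ i j : Fin n, ContDiff ℝ 2
    (fun x => g x (EuclideanSpace.single i 1) (EuclideanSpace.single j 1))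
  decay : ∀ i j : Fin n, ∃ C R : ℝ, 0 < C ∧ ∀ x : En n, R ≤ ‖x‖ → ∀ k : ℕ, k ≤ 2 →
    ‖iteratedFDeriv ℝ k (fun y =>
        g y (EuclideanSpace.single i 1) (EuclideanSpace.single j 1) -
        coneMetric n α y (EuclideanSpace.single i 1) (EuclideanSpace.single j 1)) x‖ ≤
      C * ‖x‖ ^ (-μ - (k : ℝ))
  complete : ∀ u : ℕ → En n,
    (∀ ε > 0, ∃ N, ∀ m ≥ N, ∀ k ≥ N, rdist g (u m) (u k) < ε) →
    ∃ x, ∀ ε > 0, ∃ N, ∀ m ≥ N, rdist g (u m) x < ε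

/-- `ex` is the exponential map of the metric tensor `g` at the point `x`
(tangent spaces being identified with `ℝⁿ`): `ex v = γ_v(1)` where `γ_v` is the
constant-speed geodesic with `γ_v(0) = x`, `γ̇_v(0) = v`. -/
def IsExpAt (g : MetricTensor n) (x : En n) (ex : En n → En n) : Prop :=
  ∀ v : En n, ∃ γ : ℝ → En n, γ 0 = x ∧ deriv γ 0 = v ∧
    IsGeodesicOn (rdist g) γ (Real.sqrt (g x v v)) Set.univ ∧ ex v = γ 1

/-- The exponential map of `g` exists and is proper at every point: preimages of
compact sets are compact. -/
def ProperExpAll (g : MetricTensor n) : Prop :=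
  ∀ x : En n, ∃ ex : En n → En n, IsExpAt g x ex ∧
    ∀ K : Set (En n), IsCompact K → IsCompact (ex ⁻¹' K)

/-- Second variation of the energy of `γ` on `[a,b]` along the variation field `V`
(using the global chart to form the variation `γ + s·V`). -/
def secondVar (g : MetricTensor n) (γ V : ℝ → En n) (a b : ℝ) : ℝ :=
  iteratedDeriv 2 (fun s : ℝ => cenergy g (fun t => γ t + s • V t) a b) 0

/-- The Morse index of `γ` on `[a,b]`, as a critical point of the energy, is at most
`m`: every linear space of `C¹` variation fields vanishing at the endpoints on which the
second variation of the energy is negative definite has dimension at most `m`. -/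
def MorseIndexLEOn (g : MetricTensor n) (γ : ℝ → En n) (a b : ℝ) (m : ℕ) : Prop :=
  ∀ W : Submodule ℝ (ℝ → En n),
    (∀ V ∈ W, ContDiff ℝ 1 V ∧ V a = 0 ∧ V b = 0) →
    (∀ V ∈ W, V ≠ 0 → secondVar g γ V a b < 0) →
    Module.rank ℝ W ≤ (m : Cardinal)

end

open InnerProductGeometry MeasureTheory Topology

/-! ### The development map -/

/-- The development map of the cone, based at the axis `a`: the point at distance `r` from the apex
and at angle `θ` from `a` goes to the point of `ℂ` with modulus `r` and argument `s (θ - π / 2)`,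
where `s = sin α`. -/
noncomputable def develop {n : ℕ} (s : ℝ) (a z : En n) : ℂ :=
  ⟨‖z‖ * Real.cos (s * (angle a z - π / 2)), ‖z‖ * Real.sin (s * (angle a z - π / 2))⟩

lemma develop_zero {n : ℕ} (s : ℝ) (a : En n) : develop s a 0 = 0 := by
  apply Complex.ext <;> simp [develop]

lemma norm_develop {n : ℕ} (s : ℝ) (a z : En n) : ‖develop s a z‖ = ‖z‖ := by
  have h : ‖develop s a z‖ ^ 2 = ‖z‖ ^ 2 := by
    rw [← Complex.normSq_eq_norm_sq, Complex.normSq_apply]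
    simp only [develop]
    linear_combination ‖z‖ ^ 2 * Real.sin_sq_add_cos_sq (s * (angle a z - π / 2))
  exact (pow_left_inj₀ (norm_nonneg _) (norm_nonneg _) two_ne_zero).1 h

lemma continuous_develop {n : ℕ} (s : ℝ) (a : En n) (ha : a ≠ 0) : Continuous (develop s a) := by
  rw [continuous_iff_continuousAt]
  intro z
  by_cases hz : z = 0
  · subst hz
    rw [ContinuousAt, develop_zero, tendsto_zero_iff_norm_tendsto_zero]
    simp only [norm_develop]
    simpa using (continuous_norm (E := En n)).tendsto 0
  · have h1 : ContinuousAt (fun w : En n => angle a w) z :=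
      ContinuousAt.comp (f := fun w : En n => (a, w)) (g := fun y : En n × En n => angle y.1 y.2)
        (continuousAt_angle (x := (a, z)) ha hz) (by fun_prop)
    have h2 : ContinuousAt (fun w => Complex.equivRealProdCLM.symm
        (‖w‖ * Real.cos (s * (angle a w - π / 2)), ‖w‖ * Real.sin (s * (angle a w - π / 2)))) z := by
      refine Complex.equivRealProdCLM.symm.continuous.continuousAt.comp ?_
      refine ContinuousAt.prodMk ?_ ?_
      · exact continuous_norm.continuousAt.mul
          (Real.continuous_cos.continuousAt.comp ((h1.sub continuousAt_const).const_mul s))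
      · exact continuous_norm.continuousAt.mul
          (Real.continuous_sin.continuousAt.comp ((h1.sub continuousAt_const).const_mul s))
    refine h2.congr (Eventually.of_forall fun w => ?_)
    apply Complex.ext <;> simp [develop]

/-- The law of cosines in the developed plane. -/
lemma norm_develop_sub_sq {n : ℕ} (s : ℝ) (a x y : En n) :
    ‖develop s a x - develop s a y‖ ^ 2 =
      (‖x‖ - ‖y‖) ^ 2 + 4 * ‖x‖ * ‖y‖ * Real.sin (s * (angle a x - angle a y) / 2) ^ 2 := by
  have h2 : Real.sin (s * (angle a x - angle a y) / 2) ^ 2 =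
      1 / 2 - Real.cos (s * (angle a x - angle a y)) / 2 := by
    rw [Real.sin_sq_eq_half_sub]; ring_nf
  have h3 : s * (angle a x - angle a y) =
    s * (angle a x - π / 2) - s * (angle a y - π / 2) := by ring
  rw [h2, h3, Real.cos_sub, ← Complex.normSq_eq_norm_sq, Complex.normSq_apply]
  simp only [develop, Complex.sub_re, Complex.sub_im]
  linear_combination ‖x‖ ^ 2 * Real.sin_sq_add_cos_sq (s * (angle a x - π / 2)) +
    ‖y‖ ^ 2 * Real.sin_sq_add_cos_sq (s * (angle a y - π / 2))

/-- Infinitesimal form of the contraction property of `develop`. By the triangle inequality for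
angles the angular increment is at most `τ = ∠ x y`, and `τ / 2 * cos (τ / 2) ≤ sin (τ / 2)`
compares it with the chord; the factor `(1 + cos τ) / 2 = cos² (τ / 2)` tends to `1` as
`y → x`. -/
lemma norm_develop_sub_sq_le {n : ℕ} {s : ℝ} (hs0 : 0 ≤ s) (a x y : En n)
    (h : 0 < (1 + Real.cos (angle x y)) / 2) :
    ‖develop s a x - develop s a y‖ ^ 2 ≤
      (‖x‖ - ‖y‖) ^ 2 + s ^ 2 * ((‖x - y‖ ^ 2 - (‖x‖ - ‖y‖) ^ 2) /
        ((1 + Real.cos (angle x y)) / 2)) := by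
  rw [norm_develop_sub_sq]
  set τ := angle x y with hτ
  have hτ0 : 0 ≤ τ := angle_nonneg _ _
  have hτπ : τ ≤ π := angle_le_pi _ _
  have hd : |angle a x - angle a y| ≤ τ := by
    have h1 := angle_le_angle_add_angle a x y
    have h2 := angle_le_angle_add_angle a y x
    rw [angle_comm y x] at h2
    rw [abs_le]; constructor <;> linarith
  have hcos2 : (1 + Real.cos τ) / 2 = Real.cos (τ / 2) ^ 2 := by
    rw [Real.cos_sq]; ring_nf
  have hsin2 : ‖x - y‖ ^ 2 - (‖x‖ - ‖y‖) ^ 2 = 4 * ‖x‖ * ‖y‖ * Real.sin (τ / 2) ^ 2 := by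
    have h3 := cos_angle_mul_norm_mul_norm x y
    have h4 : Real.sin (τ / 2) ^ 2 = 1 / 2 - Real.cos τ / 2 := by
      rw [Real.sin_sq_eq_half_sub]; ring_nf
    rw [norm_sub_sq_real, h4, ← h3]; ring
  have hc : 0 < Real.cos (τ / 2) := by
    have h5 : 0 ≤ Real.cos (τ / 2) := Real.cos_nonneg_of_mem_Icc ⟨by linarith, by linarith⟩
    rcases h5.lt_or_eq with h6 | h6
    · exact h6
    · rw [hcos2, ← h6] at h; simp at h
  have hlt : τ / 2 < π / 2 := by
    rcases hτπ.lt_or_eq with h6 | h6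
    · linarith
    · rw [h6, Real.cos_pi_div_two] at hc; exact absurd hc (lt_irrefl _)
  have htan : τ / 2 * Real.cos (τ / 2) ≤ Real.sin (τ / 2) := by
    have := Real.le_tan (by linarith : 0 ≤ τ / 2) hlt
    rwa [Real.tan_eq_sin_div_cos, le_div_iff₀ hc] at this
  rw [hsin2, hcos2]
  have e1 : |Real.sin (s * (angle a x - angle a y) / 2)| ≤ s * (τ / 2) := by
    refine (Real.abs_sin_le_abs).trans ?_
    rw [abs_div, abs_mul, abs_of_nonneg hs0, abs_two]
    nlinarith
  have e2 : Real.sin (s * (angle a x - angle a y) / 2) ^ 2 ≤ s ^ 2 * (τ / 2) ^ 2 := by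
    rw [← sq_abs, ← mul_pow]
    exact pow_le_pow_left₀ (abs_nonneg _) e1 2
  have e3 : (τ / 2) ^ 2 ≤ Real.sin (τ / 2) ^ 2 / Real.cos (τ / 2) ^ 2 := by
    rw [le_div_iff₀ (by positivity), ← mul_pow]
    exact pow_le_pow_left₀ (by positivity) htan 2
  have e4 : s ^ 2 * (4 * ‖x‖ * ‖y‖ * Real.sin (τ / 2) ^ 2 / Real.cos (τ / 2) ^ 2) =
    4 * ‖x‖ * ‖y‖ * (s ^ 2 * (Real.sin (τ / 2) ^ 2 / Real.cos (τ / 2) ^ 2)) := by ring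
  rw [e4]
  have e5 : 0 ≤ 4 * ‖x‖ * ‖y‖ := by positivity
  have := mul_le_mul_of_nonneg_left (e2.trans (mul_le_mul_of_nonneg_left e3 (sq_nonneg s))) e5
  linarith

lemma coneMetric_diag {n : ℕ} (α : ℝ) (x v : En n) :
    coneMetric n α x v v =
      (1 - Real.sin α ^ 2) * (⟪v, x⟫ / ‖x‖) ^ 2 + Real.sin α ^ 2 * ‖v‖ ^ 2 := by
  simp only [coneMetric, real_inner_self_eq_norm_sq]
  rw [div_pow]; ring

lemma coneMetric_le {n : ℕ} (α : ℝ) (x v : En n) : coneMetric n α x v v ≤ ‖v‖ ^ 2 := by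
  rw [coneMetric_diag]
  have h1 : |⟪v, x⟫ / ‖x‖| ≤ ‖v‖ := by
    rw [abs_div, abs_norm]
    exact div_le_of_le_mul₀ (norm_nonneg _) (norm_nonneg _) (abs_real_inner_le_norm v x)
  have h2 : (⟪v, x⟫ / ‖x‖) ^ 2 ≤ ‖v‖ ^ 2 := by
    rw [← sq_abs]; exact pow_le_pow_left₀ (abs_nonneg _) h1 2
  nlinarith [Real.sin_sq_le_one α]

lemma sqrt_coneMetric_le {n : ℕ} (α : ℝ) (x v : En n) : √(coneMetric n α x v v) ≤ ‖v‖ :=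
  (Real.sqrt_le_sqrt (coneMetric_le α x v)).trans_eq (Real.sqrt_sq (norm_nonneg v))

/-- A path whose right difference quotients are asymptotically bounded by the right limits of `g`
moves by at most `∫ g`. -/
lemma norm_sub_le_integral_of_right_slope {F : ℝ → ℂ} (hF : Continuous F) {g g' : ℝ → ℝ}
    (hg : ∀ a b, IntervalIntegrable g volume a b) (hm : StronglyMeasurable g)
    (hlim : ∀ t, Tendsto g (𝓝[>] t) (𝓝 (g' t)))
    (hslope : ∀ t r, g' t < r → ∀ᶠ z in 𝓝[>] t, ‖F z - F t‖ / (z - t) < r) :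
    ‖F 1 - F 0‖ ≤ ∫ t in (0 : ℝ)..1, g t := by
  refine image_le_of_liminf_slope_right_le_deriv_boundary (a := 0) (b := 1)
    (f := fun t => ‖F t - F 0‖) (B := fun u => ∫ t in (0 : ℝ)..u, g t) (B' := g')
    (by fun_prop) (by simp) ?_ ?_ ?_ (right_mem_Icc.2 zero_le_one)
  · exact (intervalIntegral.continuous_primitive hg 0).continuousOn
  · intro t _
    exact intervalIntegral.integral_hasDerivWithinAt_of_tendsto_ae_right (hg 0 t)
      hm.stronglyMeasurableAtFilter ((hlim t).mono_left inf_le_left)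
  · intro t _ r hr
    refine Eventually.frequently ?_
    filter_upwards [hslope t r hr, self_mem_nhdsWithin] with z hz hzt
    refine lt_of_le_of_lt ?_ hz
    have hzt' : 0 < z - t := sub_pos.2 hzt
    rw [slope_def_field]
    refine div_le_div_of_nonneg_right ?_ hzt'.le
    have := norm_sub_norm_le (F z - F 0) (F t - F 0)
    simpa using this

/-! ### Development contracts lengths -/

/-- At a point off the apex, the difference quotients of a developed path are asymptotically
bounded by the speed of the path in the cone metric. -/
lemma develop_slope_of_ne {n : ℕ} {α : ℝ} (hs0 : 0 ≤ Real.sin α) (a : En n) {γ : ℝ → En n}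
    {t : ℝ} {v : En n} (hγ : HasDerivAt γ v t) (h0 : γ t ≠ 0) {r : ℝ}
    (hr : √(coneMetric n α (γ t) v v) < r) :
    ∀ᶠ z in 𝓝[>] t,
      ‖develop (Real.sin α) a (γ z) - develop (Real.sin α) a (γ t)‖ / (z - t) < r := by
  set s := Real.sin α with hs
  have hn0 : ‖γ t‖ ≠ 0 := norm_ne_zero_iff.2 h0
  have hnorm : HasDerivAt (fun z => ‖γ z‖) (⟪v, γ t⟫ / ‖γ t‖) t := by
    have h1 := (hγ.norm_sq).sqrt (by positivity)
    simp only [Real.sqrt_sq (norm_nonneg _)] at h1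
    refine h1.congr_deriv ?_
    rw [real_inner_comm]
    field_simp
  have hle : 𝓝[>] t ≤ 𝓝[≠] t := nhdsWithin_mono _ fun z hz => ne_of_gt hz
  have T1 := (hasDerivAt_iff_tendsto_slope.1 hnorm).mono_left hle
  have T2 := (hasDerivAt_iff_tendsto_slope.1 hγ).mono_left hle
  have T3 : Tendsto (fun z => (1 + Real.cos (angle (γ z) (γ t))) / 2) (𝓝[>] t) (𝓝 1) := by
    have h1 : ContinuousAt (fun z => (1 + Real.cos (angle (γ z) (γ t))) / 2) t := by
      have h2 : ContinuousAt (fun z => angle (γ z) (γ t)) t :=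
        ContinuousAt.comp (f := fun z => (γ z, γ t))
          (g := fun y : En n × En n => angle y.1 y.2)
          (continuousAt_angle (x := (γ t, γ t)) h0 h0)
          (hγ.continuousAt.prodMk continuousAt_const)
      exact ((Real.continuous_cos.continuousAt.comp h2).const_add 1).div_const 2
    have h3 := h1.tendsto.mono_left (nhdsWithin_le_nhds (s := Ioi t))
    simpa [angle_self h0] using h3
  have T4 : Tendsto (fun z => slope (fun z => ‖γ z‖) t z ^ 2 + s ^ 2 *
      ((‖slope γ t z‖ ^ 2 - slope (fun z => ‖γ z‖) t z ^ 2) /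
        ((1 + Real.cos (angle (γ z) (γ t))) / 2))) (𝓝[>] t)
      (𝓝 (coneMetric n α (γ t) v v)) := by
    have h1 := (T1.pow 2).add ((((T2.norm.pow 2).sub (T1.pow 2)).div T3 one_ne_zero).const_mul
      (s ^ 2))
    have h2 : coneMetric n α (γ t) v v = (⟪v, γ t⟫ / ‖γ t‖) ^ 2 +
        s ^ 2 * ((‖v‖ ^ 2 - (⟪v, γ t⟫ / ‖γ t‖) ^ 2) / 1) := by
      rw [coneMetric_diag]; ring
    rw [h2]
    exact h1
  have hr0 : 0 < r := (Real.sqrt_nonneg _).trans_lt hr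
  have hr2 : coneMetric n α (γ t) v v < r ^ 2 := (Real.sqrt_lt' hr0).1 hr
  filter_upwards [T4.eventually_lt_const hr2, T3.eventually_const_lt zero_lt_one,
    self_mem_nhdsWithin] with z hz1 hz2 hz3
  have hzt : 0 < z - t := sub_pos.2 hz3
  have h1 := norm_develop_sub_sq_le hs0 a (γ z) (γ t) hz2
  rw [div_lt_iff₀ hzt]
  refine lt_of_pow_lt_pow_left₀ 2 (by positivity) (h1.trans_lt ?_)
  have e1 : slope (fun z => ‖γ z‖) t z = (‖γ z‖ - ‖γ t‖) / (z - t) := slope_def_field _ _ _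
  have e2 : ‖slope γ t z‖ = ‖γ z - γ t‖ / (z - t) := by
    rw [slope_def_module, norm_smul, norm_inv, Real.norm_of_nonneg hzt.le]; ring
  rw [e1, e2] at hz1
  have := mul_lt_mul_of_pos_right hz1 (pow_pos hzt 2)
  rw [mul_pow]
  refine lt_of_eq_of_lt ?_ this
  field_simp

/-- As a path leaves the apex, its speed in the cone metric tends to its Euclidean speed,
the direction of motion being asymptotically radial. -/
lemma tendsto_sqrt_coneMetric_of_eq_zero {n : ℕ} (α : ℝ) {γ : ℝ → En n} (hγ : ContDiff ℝ 1 γ)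
    {t : ℝ} (h0 : γ t = 0) :
    Tendsto (fun z => √(coneMetric n α (γ z) (deriv γ z) (deriv γ z))) (𝓝[>] t)
      (𝓝 ‖deriv γ t‖) := by
  have hd : Tendsto (fun z => deriv γ z) (𝓝[>] t) (𝓝 (deriv γ t)) :=
    ((hγ.continuous_deriv le_rfl).tendsto t).mono_left nhdsWithin_le_nhds
  by_cases hv : deriv γ t = 0
  · rw [hv, norm_zero]
    refine squeeze_zero (fun z => Real.sqrt_nonneg _) (fun z => sqrt_coneMetric_le α _ _) ?_
    simpa [hv] using hd.norm
  · have hγt : HasDerivAt γ (deriv γ t) t := (hγ.differentiable one_ne_zero t).hasDerivAt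
    have T2 := (hasDerivAt_iff_tendsto_slope.1 hγt).mono_left
      (nhdsWithin_mono _ fun z (hz : t < z) => ne_of_gt hz : 𝓝[>] t ≤ 𝓝[≠] t)
    have hn0 : ‖deriv γ t‖ ≠ 0 := norm_ne_zero_iff.2 hv
    have T := (((((hd.inner T2).div T2.norm hn0).pow 2).const_mul (1 - Real.sin α ^ 2)).add
      ((hd.norm.pow 2).const_mul (Real.sin α ^ 2))).sqrt
    have e : √((1 - Real.sin α ^ 2) * (⟪deriv γ t, deriv γ t⟫ / ‖deriv γ t‖) ^ 2 +
        Real.sin α ^ 2 * ‖deriv γ t‖ ^ 2) = ‖deriv γ t‖ := by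
      rw [real_inner_self_eq_norm_sq]
      rw [← Real.sqrt_sq (norm_nonneg (deriv γ t))]
      congr 1
      rw [Real.sqrt_sq (norm_nonneg (deriv γ t))]
      field_simp
      ring
    rw [e] at T
    refine T.congr' ?_
    filter_upwards [self_mem_nhdsWithin] with z hz
    have hzt : 0 < z - t := sub_pos.2 hz
    simp only [Pi.div_apply]
    rw [coneMetric_diag, slope_def_module, h0, sub_zero, real_inner_smul_right, norm_smul,
      norm_inv, Real.norm_of_nonneg hzt.le, mul_div_mul_left _ _ (by positivity)]

lemma continuousAt_sqrt_coneMetric {n : ℕ} (α : ℝ) {γ : ℝ → En n} (hγ : ContDiff ℝ 1 γ)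
    {t : ℝ} (h0 : γ t ≠ 0) :
    ContinuousAt (fun z => √(coneMetric n α (γ z) (deriv γ z) (deriv γ z))) t := by
  have hc : ContinuousAt γ t := hγ.continuous.continuousAt
  have hd : ContinuousAt (deriv γ) t := (hγ.continuous_deriv le_rfl).continuousAt
  simp only [coneMetric_diag]
  exact (((((hd.inner hc).div hc.norm (norm_ne_zero_iff.2 h0)).pow 2).const_mul _).add
    ((hd.norm.pow 2).const_mul _)).sqrt

lemma stronglyMeasurable_sqrt_coneMetric {n : ℕ} (α : ℝ) {γ : ℝ → En n} (hγ : ContDiff ℝ 1 γ) :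
    StronglyMeasurable (fun z => √(coneMetric n α (γ z) (deriv γ z) (deriv γ z))) := by
  have hc : Measurable γ := hγ.continuous.measurable
  have hd : Measurable (deriv γ) := measurable_deriv γ
  simp only [coneMetric_diag]
  exact Measurable.stronglyMeasurable (by fun_prop)

lemma intervalIntegrable_sqrt_coneMetric {n : ℕ} (α : ℝ) {γ : ℝ → En n} (hγ : ContDiff ℝ 1 γ)
    (b c : ℝ) :
    IntervalIntegrable (fun z => √(coneMetric n α (γ z) (deriv γ z) (deriv γ z))) volume b c := by
  have hd := hγ.continuous_deriv le_rfl
  refine (hd.norm.intervalIntegrable b c).mono_fun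
    (stronglyMeasurable_sqrt_coneMetric α hγ).aestronglyMeasurable (Eventually.of_forall fun z => ?_)
  simp only [Real.norm_of_nonneg (Real.sqrt_nonneg _), norm_norm]
  exact sqrt_coneMetric_le α _ _

/-- Development does not increase the length of paths. -/
lemma norm_develop_sub_le_clen {n : ℕ} {α : ℝ} (hs0 : 0 ≤ Real.sin α) {a : En n} (ha : a ≠ 0)
    {γ : ℝ → En n} (hγ : ContDiff ℝ 1 γ) :
    ‖develop (Real.sin α) a (γ 1) - develop (Real.sin α) a (γ 0)‖ ≤
      clen (coneMetric n α) γ 0 1 := by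
  classical
  -- At the apex the integrand is discontinuous, and its right limit is the Euclidean speed.
  refine norm_sub_le_integral_of_right_slope (F := fun t => develop (Real.sin α) a (γ t))
    (g' := fun t => if γ t = 0 then ‖deriv γ t‖ else
      √(coneMetric n α (γ t) (deriv γ t) (deriv γ t)))
    ((continuous_develop _ a ha).comp hγ.continuous)
    (intervalIntegrable_sqrt_coneMetric α hγ) (stronglyMeasurable_sqrt_coneMetric α hγ) ?_ ?_
  · intro t
    by_cases h0 : γ t = 0
    · simpa [h0] using tendsto_sqrt_coneMetric_of_eq_zero α hγ h0
    · simpa [h0] using (continuousAt_sqrt_coneMetric α hγ h0).tendsto.mono_left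
        (nhdsWithin_le_nhds (s := Ioi t))
  · intro t r hr
    have hγt : HasDerivAt γ (deriv γ t) t := (hγ.differentiable one_ne_zero t).hasDerivAt
    by_cases h0 : γ t = 0
    · rw [if_pos h0] at hr
      have T2 := (hasDerivAt_iff_tendsto_slope.1 hγt).mono_left
        (nhdsWithin_mono _ fun z (hz : t < z) => ne_of_gt hz : 𝓝[>] t ≤ 𝓝[≠] t)
      filter_upwards [T2.norm.eventually_lt_const hr, self_mem_nhdsWithin] with z hz1 hz2
      have hzt : 0 < z - t := sub_pos.2 hz2
      rw [slope_def_module, norm_smul, norm_inv, Real.norm_of_nonneg hzt.le, h0, sub_zero] at hz1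
      rw [h0, develop_zero, sub_zero, norm_develop, div_eq_inv_mul]
      exact hz1
    · rw [if_neg h0] at hr
      exact develop_slope_of_ne hs0 a hγt h0 hr

lemma norm_develop_sub_le_coneDist {n : ℕ} {α : ℝ} (hs0 : 0 ≤ Real.sin α) {a : En n}
    (ha : a ≠ 0) (x y : En n) :
    ‖develop (Real.sin α) a y - develop (Real.sin α) a x‖ ≤ coneDist n α x y := by
  refine le_csInf ?_ ?_
  · exact ⟨_, fun t => x + t • (y - x), by fun_prop, by simp, by simp, rfl⟩
  · rintro L ⟨γ, hγ, rfl, rfl, rfl⟩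
    exact norm_develop_sub_le_clen hs0 ha hγ

lemma coneDist_le_clen {n : ℕ} (α : ℝ) {γ : ℝ → En n} (hγ : ContDiff ℝ 1 γ) :
    coneDist n α (γ 0) (γ 1) ≤ clen (coneMetric n α) γ 0 1 := by
  refine csInf_le ⟨0, ?_⟩ ⟨γ, hγ, rfl, rfl, rfl⟩
  rintro L ⟨c, -, -, -, rfl⟩
  exact intervalIntegral.integral_nonneg zero_le_one fun _ _ => Real.sqrt_nonneg _

/-! ### The minimising geodesics -/

/-- The geodesic of the half-plane `span {a} ⊕ ℝ₊ ξ` which develops to the line `re = m`, with the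
point `m (1 + i u)` of that line as parameter `u`. This description holds while
`|arctan u| ≤ s π / 2`; beyond that range the curve crosses the axis. -/
noncomputable def meridian {n : ℕ} (s m : ℝ) (a ξ : En n) (u : ℝ) : En n :=
  (m * √(1 + u ^ 2)) • (Real.cos (Real.arctan u / s) • ξ - Real.sin (Real.arctan u / s) • a)

lemma coneMetric_polar {n : ℕ} (α : ℝ) {e f : En n} (he : ‖e‖ = 1) (hf : ‖f‖ = 1)
    (hef : ⟪e, f⟫ = 0) {r : ℝ} (hr : 0 < r) (A B : ℝ) :
    coneMetric n α (r • e) (A • e + B • f) (A • e + B • f) =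
      A ^ 2 + Real.sin α ^ 2 * B ^ 2 := by
  have hfe : ⟪f, e⟫ = 0 := by rw [real_inner_comm]; exact hef
  have hee : ⟪e, e⟫ = 1 := by rw [real_inner_self_eq_norm_sq, he, one_pow]
  have hff : ⟪f, f⟫ = 1 := by rw [real_inner_self_eq_norm_sq, hf, one_pow]
  rw [coneMetric_diag, ← real_inner_self_eq_norm_sq]
  simp only [inner_add_left, inner_add_right, real_inner_smul_left, real_inner_smul_right,
    hee, hff, he, hef, hfe, norm_smul, Real.norm_of_nonneg hr.le]
  field_simp
  ring

lemma coneMetric_smul {n : ℕ} (α k : ℝ) (x v : En n) :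
    coneMetric n α x (k • v) (k • v) = k ^ 2 * coneMetric n α x v v := by
  simp only [coneMetric, real_inner_smul_left, real_inner_smul_right]
  ring

lemma norm_cos_smul_sub {n : ℕ} {a ξ : En n} (ha : ‖a‖ = 1) (hξ : ‖ξ‖ = 1) (haξ : ⟪a, ξ⟫ = 0)
    (ψ : ℝ) : ‖Real.cos ψ • ξ - Real.sin ψ • a‖ = 1 := by
  have hξa : ⟪ξ, a⟫ = 0 := by rw [real_inner_comm]; exact haξ
  have haa : ⟪a, a⟫ = 1 := by rw [real_inner_self_eq_norm_sq, ha, one_pow]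
  have hξξ : ⟪ξ, ξ⟫ = 1 := by rw [real_inner_self_eq_norm_sq, hξ, one_pow]
  have : ‖Real.cos ψ • ξ - Real.sin ψ • a‖ ^ 2 = 1 := by
    rw [← real_inner_self_eq_norm_sq]
    simp only [inner_sub_left, inner_sub_right, real_inner_smul_left, real_inner_smul_right,
      haa, hξξ, haξ, hξa]
    linear_combination Real.sin_sq_add_cos_sq ψ
  exact (pow_eq_one_iff_of_nonneg (norm_nonneg _) two_ne_zero).1 this

lemma hasDerivAt_meridian {n : ℕ} (s m : ℝ) (a ξ : En n) (u : ℝ) :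
    HasDerivAt (meridian s m a ξ)
      ((m * (u / √(1 + u ^ 2))) •
          (Real.cos (Real.arctan u / s) • ξ - Real.sin (Real.arctan u / s) • a) +
        (m * √(1 + u ^ 2) * (1 / (1 + u ^ 2) / s)) •
          (Real.cos (Real.arctan u / s + π / 2) • ξ -
            Real.sin (Real.arctan u / s + π / 2) • a)) u := by
  have h0 : (1 + u ^ 2) ≠ 0 := by positivity
  have h1 : HasDerivAt (fun u : ℝ => m * √(1 + u ^ 2)) (m * (u / √(1 + u ^ 2))) u := by
    have := (((hasDerivAt_pow 2 u).const_add 1).sqrt h0).const_mul m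
    refine this.congr_deriv ?_
    push_cast
    field_simp
  have h2 : HasDerivAt (fun u : ℝ => Real.arctan u / s) (1 / (1 + u ^ 2) / s) u :=
    (Real.hasDerivAt_arctan u).div_const s
  have h3 := h1.smul ((h2.cos.smul_const ξ).sub (h2.sin.smul_const a))
  refine h3.congr_deriv ?_
  rw [Real.cos_add_pi_div_two, Real.sin_add_pi_div_two]
  simp only [Pi.sub_apply]
  module

lemma contDiff_meridian {n : ℕ} (s m : ℝ) (a ξ : En n) : ContDiff ℝ 1 (meridian s m a ξ) := by
  have h1 : ContDiff ℝ 1 (fun u : ℝ => √(1 + u ^ 2)) :=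
    ContDiff.sqrt (by fun_prop) fun u => by positivity
  have h2 : ContDiff ℝ 1 (fun u : ℝ => Real.arctan u / s) := Real.contDiff_arctan.div_const s
  exact (contDiff_const.mul h1).smul
    (((Real.contDiff_cos.comp h2).smul contDiff_const).sub
      ((Real.contDiff_sin.comp h2).smul contDiff_const))

lemma coneMetric_meridian {n : ℕ} {α m : ℝ} (hs : 0 < Real.sin α) (hm : 0 < m) {a ξ : En n}
    (ha : ‖a‖ = 1) (hξ : ‖ξ‖ = 1) (haξ : ⟪a, ξ⟫ = 0) (u : ℝ) :
    coneMetric n α (meridian (Real.sin α) m a ξ u) (deriv (meridian (Real.sin α) m a ξ) u)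
      (deriv (meridian (Real.sin α) m a ξ) u) = m ^ 2 := by
  have hξa : ⟪ξ, a⟫ = 0 := by rw [real_inner_comm]; exact haξ
  have haa : ⟪a, a⟫ = 1 := by rw [real_inner_self_eq_norm_sq, ha, one_pow]
  have hξξ : ⟪ξ, ξ⟫ = 1 := by rw [real_inner_self_eq_norm_sq, hξ, one_pow]
  have hpos : 0 < 1 + u ^ 2 := by positivity
  rw [(hasDerivAt_meridian _ m a ξ u).deriv, meridian,
    coneMetric_polar α (norm_cos_smul_sub ha hξ haξ _) (norm_cos_smul_sub ha hξ haξ _) ?_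
      (by positivity)]
  · have h1 : √(1 + u ^ 2) ^ 2 = 1 + u ^ 2 := Real.sq_sqrt hpos.le
    have h2 : √(1 + u ^ 2) ≠ 0 := by positivity
    generalize √(1 + u ^ 2) = w at h1 h2 ⊢
    rw [← h1]
    field_simp
    linear_combination -h1
  · rw [Real.cos_add_pi_div_two, Real.sin_add_pi_div_two]
    simp only [inner_sub_left, inner_sub_right, real_inner_smul_left, real_inner_smul_right,
      haa, hξξ, haξ, hξa]
    ring

lemma coneDist_meridian_le {n : ℕ} {α m : ℝ} (hs : 0 < Real.sin α) (hm : 0 < m) {a ξ : En n}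
    (ha : ‖a‖ = 1) (hξ : ‖ξ‖ = 1) (haξ : ⟪a, ξ⟫ = 0) (u v : ℝ) :
    coneDist n α (meridian (Real.sin α) m a ξ u) (meridian (Real.sin α) m a ξ v) ≤
      m * |u - v| := by
  set c := meridian (Real.sin α) m a ξ with hc
  have hcd : ContDiff ℝ 1 c := contDiff_meridian _ m a ξ
  have hγ : ContDiff ℝ 1 (fun t : ℝ => c (u + t * (v - u))) := hcd.comp (by fun_prop)
  have h1 := coneDist_le_clen α hγ
  have h2 : clen (coneMetric n α) (fun t : ℝ => c (u + t * (v - u))) 0 1 = m * |u - v| := by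
    have h3 : ∀ t : ℝ, √(coneMetric n α (c (u + t * (v - u)))
        (deriv (fun t : ℝ => c (u + t * (v - u))) t)
        (deriv (fun t : ℝ => c (u + t * (v - u))) t)) = m * |u - v| := by
      intro t
      have h4 : HasDerivAt (fun t : ℝ => u + t * (v - u)) (v - u) t := by
        simpa using ((hasDerivAt_id t).mul_const (v - u)).const_add u
      have h5 := ((hcd.differentiable one_ne_zero (u + t * (v - u))).hasDerivAt).scomp t h4
      have h6 : deriv (fun t : ℝ => c (u + t * (v - u))) t =
        (v - u) • deriv c (u + t * (v - u)) := h5.deriv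
      rw [h6, coneMetric_smul, coneMetric_meridian hs hm ha hξ haξ, ← mul_pow,
        Real.sqrt_sq_eq_abs, abs_mul, abs_of_pos hm, abs_sub_comm, mul_comm]
    simp only [clen, h3]
    simp
  simpa [h2] using h1

lemma develop_meridian {n : ℕ} {s m : ℝ} (hs : 0 < s) (hm : 0 < m) {a ξ : En n}
    (ha : ‖a‖ = 1) (hξ : ‖ξ‖ = 1) (haξ : ⟪a, ξ⟫ = 0) {u : ℝ}
    (hu : |Real.arctan u| ≤ s * (π / 2)) :
    develop s a (meridian s m a ξ u) = ⟨m, m * u⟩ := by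
  have hξa : ⟪ξ, a⟫ = 0 := by rw [real_inner_comm]; exact haξ
  have haa : ⟪a, a⟫ = 1 := by rw [real_inner_self_eq_norm_sq, ha, one_pow]
  have hpos : 0 < 1 + u ^ 2 := by positivity
  have h1 : ‖meridian s m a ξ u‖ = m * √(1 + u ^ 2) := by
    rw [meridian, norm_smul, norm_cos_smul_sub ha hξ haξ, mul_one,
      Real.norm_of_nonneg (by positivity)]
  have h2 : angle a (meridian s m a ξ u) = Real.arctan u / s + π / 2 := by
    rw [meridian, angle_smul_right_of_pos _ _ (by positivity), angle,
      norm_cos_smul_sub ha hξ haξ, ha]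
    simp only [inner_sub_right, real_inner_smul_right, haξ, haa]
    have h3 : |Real.arctan u / s| ≤ π / 2 := by
      rw [abs_div, abs_of_pos hs, div_le_iff₀ hs]; linarith
    rw [abs_le] at h3
    rw [show (Real.cos (Real.arctan u / s) * 0 - Real.sin (Real.arctan u / s) * 1) / (1 * 1) =
      Real.cos (Real.arctan u / s + π / 2) by rw [Real.cos_add_pi_div_two]; ring]
    exact Real.arccos_cos (by linarith) (by linarith)
  have h3 : s * (angle a (meridian s m a ξ u) - π / 2) = Real.arctan u := by
    rw [h2]; field_simp; ring
  have h4 : √(1 + u ^ 2) ≠ 0 := by positivity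
  simp only [develop, h3, h1, Real.cos_arctan, Real.sin_arctan]
  apply Complex.ext
  · simp only; field_simp
  · simp only; field_simp

/-- Meridians are minimising between their two intersections with the axis. -/
lemma coneDist_meridian {n : ℕ} {α m : ℝ} (hs : 0 < Real.sin α) (hm : 0 < m) {a ξ : En n}
    (ha : ‖a‖ = 1) (hξ : ‖ξ‖ = 1) (haξ : ⟪a, ξ⟫ = 0) {u v : ℝ}
    (hu : |Real.arctan u| ≤ Real.sin α * (π / 2)) (hv : |Real.arctan v| ≤ Real.sin α * (π / 2)) :
    coneDist n α (meridian (Real.sin α) m a ξ u) (meridian (Real.sin α) m a ξ v) =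
      m * |u - v| := by
  refine le_antisymm (coneDist_meridian_le hs hm ha hξ haξ u v) ?_
  have ha0 : a ≠ 0 := by rw [← norm_ne_zero_iff, ha]; exact one_ne_zero
  have h1 := norm_develop_sub_le_coneDist hs.le ha0 (meridian (Real.sin α) m a ξ u)
    (meridian (Real.sin α) m a ξ v)
  rw [develop_meridian hs hm ha hξ haξ hu, develop_meridian hs hm ha hξ haξ hv] at h1
  refine le_trans ?_ h1
  refine le_trans (le_of_eq ?_) (Complex.abs_im_le_norm _)
  simp only [Complex.sub_im]
  rw [← mul_sub, abs_mul, abs_of_pos hm, abs_sub_comm]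

lemma exists_unit_orthogonal {n : ℕ} (hn : 2 ≤ n) {a : En n} (ha : ‖a‖ = 1) (w : En n)
    (haw : ⟪a, w⟫ = 0) : ∃ ξ : En n, ‖ξ‖ = 1 ∧ ⟪a, ξ⟫ = 0 ∧ w = ‖w‖ • ξ := by
  by_cases hw : w = 0
  · have ha0 : a ≠ 0 := by rw [← norm_ne_zero_iff, ha]; exact one_ne_zero
    have h1 := Submodule.finrank_add_finrank_orthogonal (ℝ ∙ a)
    rw [finrank_span_singleton ha0, finrank_euclideanSpace_fin] at h1
    have : Nontrivial (ℝ ∙ a)ᗮ := Module.nontrivial_of_finrank_pos (R := ℝ) (by omega)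
    obtain ⟨⟨v, hv⟩, hv0⟩ := exists_ne (0 : (ℝ ∙ a)ᗮ)
    have hv0' : v ≠ 0 := fun h => hv0 (by ext1; exact h)
    rw [Submodule.mem_orthogonal_singleton_iff_inner_right] at hv
    refine ⟨‖v‖⁻¹ • v, norm_smul_inv_norm hv0', ?_, ?_⟩
    · rw [real_inner_smul_right, hv, mul_zero]
    · simp [hw]
  · refine ⟨‖w‖⁻¹ • w, norm_smul_inv_norm hw, ?_, ?_⟩
    · rw [real_inner_smul_right, haw, mul_zero]
    · rw [smul_smul, mul_inv_cancel₀ (norm_ne_zero_iff.2 hw), one_smul]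

/-- Polar coordinates around the axis `a`. -/
lemma exists_polar {n : ℕ} (hn : 2 ≤ n) {a : En n} (ha : ‖a‖ = 1) (z : En n) :
    ∃ ξ : En n, ‖ξ‖ = 1 ∧ ⟪a, ξ⟫ = 0 ∧
      z = ‖z‖ • (Real.cos (angle a z) • a + Real.sin (angle a z) • ξ) := by
  have haa : ⟪a, a⟫ = 1 := by rw [real_inner_self_eq_norm_sq, ha, one_pow]
  have hc : Real.cos (angle a z) * ‖z‖ = ⟪a, z⟫ := by
    have := cos_angle_mul_norm_mul_norm a z
    rwa [ha, one_mul] at this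
  set w := z - ⟪a, z⟫ • a with hw
  have haw : ⟪a, w⟫ = 0 := by
    rw [hw, inner_sub_right, real_inner_smul_right, haa]; ring
  have hnw : ‖w‖ = ‖z‖ * Real.sin (angle a z) := by
    have h1 : ‖w‖ ^ 2 = (‖z‖ * Real.sin (angle a z)) ^ 2 := by
      rw [hw, norm_sub_sq_real, real_inner_smul_right, norm_smul, ha, real_inner_comm,
        Real.norm_eq_abs, mul_one, sq_abs, real_inner_comm, ← hc,
        mul_pow ‖z‖, Real.sin_sq]
      ring
    exact (pow_left_inj₀ (norm_nonneg _)
      (mul_nonneg (norm_nonneg _) (sin_angle_nonneg _ _)) two_ne_zero).1 h1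
  obtain ⟨ξ, h1, h2, h3⟩ := exists_unit_orthogonal hn ha w haw
  refine ⟨ξ, h1, h2, ?_⟩
  rw [smul_add, smul_smul, smul_smul, ← hnw, ← h3, mul_comm ‖z‖, hc, hw]
  abel

lemma eq_meridian {n : ℕ} {s m : ℝ} (hs : 0 < s) (hs1 : s < 1) {a ξ z : En n}
    (hz : z = ‖z‖ • (Real.cos (angle a z) • a + Real.sin (angle a z) • ξ))
    (hre : (develop s a z).re = m) :
    z = meridian s m a ξ (Real.tan (s * (angle a z - π / 2))) := by
  have h0 := angle_nonneg a z
  have h1 := angle_le_pi a z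
  have hπ := Real.pi_pos
  set ψ := s * (angle a z - π / 2) with hψ
  have hψ1 : -(π / 2) < ψ := by nlinarith
  have hψ2 : ψ < π / 2 := by nlinarith
  have hcos : 0 < Real.cos ψ := Real.cos_pos_of_mem_Ioo ⟨hψ1, hψ2⟩
  have h2 : Real.arctan (Real.tan ψ) = ψ := Real.arctan_tan hψ1 hψ2
  have h3 : ψ / s = angle a z - π / 2 := by rw [hψ]; field_simp
  have h4 : m * √(1 + Real.tan ψ ^ 2) = ‖z‖ := by
    have h5 : m = ‖z‖ * Real.cos ψ := hre.symm
    have h6 : √(1 + Real.tan ψ ^ 2) = (Real.cos ψ)⁻¹ := by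
      rw [← inv_inv (√(1 + Real.tan ψ ^ 2)), Real.inv_sqrt_one_add_tan_sq hcos]
    rw [h5, h6]; field_simp
  rw [meridian, h2, h3, h4, Real.cos_sub_pi_div_two, Real.sin_sub_pi_div_two]
  nth_rewrite 1 [hz]
  module

/-! ### The trace of the minimising geodesics -/

/-- The equality case of the triangle inequality in `ℂ`: a point whose distances to the endpoints
of a vertical segment are at most `t` and `1 - t` times its length lies on the line spanned by
the segment. -/
lemma re_eq_of_norm_sub_le {m h t : ℝ} {w : ℂ}
    (h1 : ‖w - ⟨m, -h⟩‖ ≤ 2 * h * t) (h2 : ‖(⟨m, h⟩ : ℂ) - w‖ ≤ 2 * h * (1 - t)) :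
    w.re = m := by
  have e1 : w.im + h ≤ 2 * h * t := by
    have := (le_abs_self _).trans ((Complex.abs_im_le_norm (w - ⟨m, -h⟩)).trans h1)
    simpa using this
  have e2 : h - w.im ≤ 2 * h * (1 - t) := by
    have := (le_abs_self _).trans ((Complex.abs_im_le_norm ((⟨m, h⟩ : ℂ) - w)).trans h2)
    simpa using this
  have e3 : w.im + h = 2 * h * t := by linarith
  have e4 : ‖w - ⟨m, -h⟩‖ ^ 2 ≤ (2 * h * t) ^ 2 := pow_le_pow_left₀ (norm_nonneg _) h1 2
  rw [← Complex.normSq_eq_norm_sq, Complex.normSq_apply] at e4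
  simp only [Complex.sub_re, Complex.sub_im] at e4
  rw [← e3] at e4
  have e5 : (w.re - m) ^ 2 ≤ 0 := by linarith
  have e6 : w.re - m = 0 := pow_eq_zero_iff two_ne_zero |>.1 (le_antisymm e5 (sq_nonneg _))
  linarith

/-- The union of the minimising segments is the preimage under development of the line through
the developed endpoints. -/
lemma iUnion_minSeg_eq {n : ℕ} (hn : 2 ≤ n) {α ρ : ℝ} (hs : 0 < Real.sin α)
    (hs1 : Real.sin α < 1) (hρ : 0 < ρ) {a : En n} (ha : ‖a‖ = 1) :
    (⋃ γ ∈ {γ : ℝ → En n | IsMinSeg (coneDist n α) γ (ρ • a) (-(ρ • a))}, γ '' Set.Icc 0 1) =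
      {z | (develop (Real.sin α) a z).re = ρ * Real.cos (Real.sin α * (π / 2))} := by
  set s := Real.sin α with hsdef
  have hπ := Real.pi_pos
  have ha0 : a ≠ 0 := by rw [← norm_ne_zero_iff, ha]; exact one_ne_zero
  have hlt : s * (π / 2) < π / 2 := by nlinarith
  have hpos : 0 < s * (π / 2) := by positivity
  have hcos : 0 < Real.cos (s * (π / 2)) := Real.cos_pos_of_mem_Ioo ⟨by linarith, hlt⟩
  set m := ρ * Real.cos (s * (π / 2)) with hmdef
  have hm : 0 < m := by positivity
  set U := Real.tan (s * (π / 2)) with hUdef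
  have hU : 0 < U := Real.tan_pos_of_pos_of_lt_pi_div_two hpos hlt
  have hatU : Real.arctan U = s * (π / 2) := Real.arctan_tan (by linarith) hlt
  have hmem : ∀ u, |u| ≤ U → |Real.arctan u| ≤ s * (π / 2) := by
    intro u hu
    rw [abs_le] at hu ⊢
    rw [← hatU, ← Real.arctan_neg]
    exact ⟨Real.arctan_strictMono.monotone hu.1, Real.arctan_strictMono.monotone hu.2⟩
  have hUU : |U| ≤ U := (abs_of_pos hU).le
  have hUU' : |-U| ≤ U := by rw [abs_neg]; exact hUU
  have hmU : m * √(1 + U ^ 2) = ρ := by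
    have h6 : √(1 + U ^ 2) = (Real.cos (s * (π / 2)))⁻¹ := by
      rw [← inv_inv (√(1 + U ^ 2)), Real.inv_sqrt_one_add_tan_sq hcos]
    rw [h6, hmdef, mul_inv_cancel_right₀ hcos.ne']
  have hq : ∀ ξ : En n, meridian s m a ξ U = -(ρ • a) := by
    intro ξ
    rw [meridian, hmU, hatU, mul_div_cancel_left₀ _ hs.ne']
    simp
  have hp : ∀ ξ : En n, meridian s m a ξ (-U) = ρ • a := by
    intro ξ
    rw [meridian, neg_sq, hmU, Real.arctan_neg, hatU, neg_div, mul_div_cancel_left₀ _ hs.ne']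
    simp
  ext z
  simp only [mem_iUnion, mem_ofPred_eq, mem_image, exists_prop]
  constructor
  · rintro ⟨γ, ⟨hγ0, hγ1, hγ⟩, t, ht, rfl⟩
    obtain ⟨ξ, hξ, haξ, -⟩ := exists_polar hn ha a
    have hd : coneDist n α (ρ • a) (-(ρ • a)) = 2 * (m * U) := by
      have h3 := coneDist_meridian hs hm ha hξ haξ (hmem _ hUU') (hmem _ hUU)
      rw [hp ξ, hq ξ, abs_of_nonpos (by linarith)] at h3
      rw [h3]
      ring
    have hdp : develop s a (ρ • a) = ⟨m, -(m * U)⟩ := by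
      rw [← hp ξ, develop_meridian hs hm ha hξ haξ (hmem _ hUU'), mul_neg]
    have hdq : develop s a (-(ρ • a)) = ⟨m, m * U⟩ := by
      rw [← hq ξ, develop_meridian hs hm ha hξ haξ (hmem _ hUU)]
    have h1 := norm_develop_sub_le_coneDist hs.le ha0 (γ 0) (γ t)
    have h2 := norm_develop_sub_le_coneDist hs.le ha0 (γ t) (γ 1)
    rw [hγ 0 (by simp) t ht, hγ0, hd, hdp, abs_of_nonpos (by linarith [ht.1])] at h1
    rw [hγ t ht 1 (by simp), hγ1, hd, hdq, abs_of_nonpos (by linarith [ht.2])] at h2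
    exact re_eq_of_norm_sub_le (h := m * U) (t := t) (by simpa using h1) (by simpa using h2)
  · intro hz
    obtain ⟨ξ, hξ, haξ, hpol⟩ := exists_polar hn ha z
    have hzm := eq_meridian hs hs1 hpol hz
    set u := Real.tan (s * (angle a z - π / 2)) with hu
    have huU : |u| ≤ U := by
      have h0 := angle_nonneg a z
      have h1 := angle_le_pi a z
      have h2 : s * (angle a z - π / 2) ≤ s * (π / 2) :=
        mul_le_mul_of_nonneg_left (by linarith) hs.le
      have h3 : -(s * (π / 2)) ≤ s * (angle a z - π / 2) := by nlinarith
      have hmono := Real.strictMonoOn_tan.monotoneOn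
      rw [abs_le, hu, hUdef, ← Real.tan_neg]
      exact ⟨hmono ⟨by linarith, by linarith⟩ ⟨by linarith, by linarith⟩ h3,
        hmono ⟨by linarith, by linarith⟩ ⟨by linarith, by linarith⟩ h2⟩
    have hline : ∀ t ∈ Set.Icc (0 : ℝ) 1, |-U + 2 * U * t| ≤ U := by
      intro t ht
      rw [abs_le]
      constructor <;> nlinarith [ht.1, ht.2]
    have hdist : ∀ x ∈ Set.Icc (0 : ℝ) 1, ∀ y ∈ Set.Icc (0 : ℝ) 1,
        coneDist n α (meridian s m a ξ (-U + 2 * U * x)) (meridian s m a ξ (-U + 2 * U * y)) =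
          m * (2 * U * |x - y|) := by
      intro x hx y hy
      rw [coneDist_meridian hs hm ha hξ haξ (hmem _ (hline x hx)) (hmem _ (hline y hy)),
        show -U + 2 * U * x - (-U + 2 * U * y) = 2 * U * (x - y) by ring, abs_mul,
        abs_of_pos (by positivity : 0 < 2 * U)]
    have e0 : meridian s m a ξ (-U + 2 * U * 0) = ρ • a := by rw [← hp ξ]; congr 1; ring
    have e1 : meridian s m a ξ (-U + 2 * U * 1) = -(ρ • a) := by rw [← hq ξ]; congr 1; ring
    refine ⟨fun t => meridian s m a ξ (-U + 2 * U * t), ⟨e0, e1, ?_⟩, (u + U) / (2 * U), ?_, ?_⟩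
    · intro x hx y hy
      have h3 := hdist 0 (by simp) 1 (by simp)
      rw [e0, e1] at h3
      rw [h3, hdist x hx y hy]
      simp
      ring
    · rw [abs_le] at huU
      constructor
      · exact div_nonneg (by linarith) (by linarith)
      · rw [div_le_one (by linarith)]; linarith
    · simp only
      rw [mul_div_cancel₀ _ (by positivity : 2 * U ≠ 0)]
      rw [show -U + (u + U) = u by ring]
      exact hzm.symm

lemma develop_re_smul {n : ℕ} (s : ℝ) (a z : En n) {r : ℝ} (hr : 0 < r) :
    (develop s a (r • z)).re = r * (develop s a z).re := by
  simp only [develop]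
  rw [angle_smul_right_of_pos _ _ hr, norm_smul, Real.norm_of_nonneg hr.le, mul_assoc]

lemma norm_mul_cos_le_develop_re {n : ℕ} {s : ℝ} (hs : 0 < s) (hs1 : s < 1) (a z : En n) :
    ‖z‖ * Real.cos (s * (π / 2)) ≤ (develop s a z).re := by
  have hπ := Real.pi_pos
  have h0 := angle_nonneg a z
  have h1 := angle_le_pi a z
  refine mul_le_mul_of_nonneg_left ?_ (norm_nonneg z)
  rw [← Real.cos_abs (s * (angle a z - π / 2))]
  refine Real.cos_le_cos_of_nonneg_of_le_pi (abs_nonneg _) (by nlinarith) ?_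
  rw [abs_mul, abs_of_pos hs]
  refine mul_le_mul_of_nonneg_left ?_ hs.le
  rw [abs_le]; constructor <;> linarith

/-- A level set of a continuous, positively homogeneous function which is positive off the origin
is a radial graph over the unit sphere. -/
noncomputable def sphereHomeomorphLevel {n : ℕ} (f : En n → ℝ) (hf : Continuous f)
    (hpos : ∀ z, z ≠ 0 → 0 < f z) (hsmul : ∀ (r : ℝ) z, 0 < r → f (r • z) = r * f z)
    (h0 : f 0 = 0) (m : ℝ) (hm : 0 < m) :
    ↥(Metric.sphere (0 : En n) 1) ≃ₜ ↥{z | f z = m} where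
  toFun u := ⟨(m / f u) • (u : En n), by
    have h1 : 0 < f u := hpos u (ne_zero_of_mem_unit_sphere u)
    rw [mem_ofPred_eq, hsmul _ _ (by positivity)]
    field_simp⟩
  invFun z := ⟨‖(z : En n)‖⁻¹ • (z : En n), by
    have hz : (z : En n) ≠ 0 := by
      intro h
      have h1 : f z = m := z.2
      rw [h, h0] at h1
      exact hm.ne h1
    rw [mem_sphere_zero_iff_norm]
    exact norm_smul_inv_norm hz⟩
  left_inv u := by
    have h1 : 0 < f u := hpos u (ne_zero_of_mem_unit_sphere u)
    have h2 : ‖(u : En n)‖ = 1 := mem_sphere_zero_iff_norm.1 u.2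
    have h3 : 0 < m / f u := by positivity
    ext1
    simp only
    rw [norm_smul, h2, mul_one, Real.norm_of_nonneg h3.le, smul_smul, inv_mul_cancel₀ h3.ne',
      one_smul]
  right_inv z := by
    have h1 : f z = m := z.2
    have hz : (z : En n) ≠ 0 := by
      intro h
      rw [h, h0] at h1
      exact hm.ne h1
    have h2 : 0 < ‖(z : En n)‖ := norm_pos_iff.2 hz
    ext1
    simp only
    rw [hsmul _ _ (by positivity), h1, smul_smul]
    rw [show m / (‖(z : En n)‖⁻¹ * m) * ‖(z : En n)‖⁻¹ = 1 by field_simp, one_smul]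
  continuous_toFun := by
    refine Continuous.subtype_mk ?_ _
    refine Continuous.smul (continuous_const.div (hf.comp continuous_subtype_val) ?_)
      continuous_subtype_val
    intro u
    exact (hpos u (ne_zero_of_mem_unit_sphere u)).ne'
  continuous_invFun := by
    refine Continuous.subtype_mk ?_ _
    refine Continuous.smul (continuous_subtype_val.norm.inv₀ ?_) continuous_subtype_val
    intro z h
    have h1 : f z = m := z.2
    rw [norm_eq_zero.1 h, h0] at h1
    exact hm.ne h1

/-- the trace of the minimising geodesics is a topological sphere.
For antipodal `p = ρa`, `q = -ρa` of `C_α^n` (`n ≥ 3`), the union `L^T_{p,q}` of the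
images of all length-minimising geodesic segments from `p` to `q`, with the Euclidean
subspace topology, is homeomorphic to `S^{n-1}`; in particular the apex `o` lies in the
bounded component of `ℝⁿ \ L^T_{p,q}`. -/
theorem statement_7 (n : ℕ) (hn : 3 ≤ n) (α ρ : ℝ) (hα : α ∈ Set.Ioo 0 (π / 2))
    (hρ : 0 < ρ) (a : En n) (ha : ‖a‖ = 1) :
    let p : En n := ρ • a
    let q : En n := -(ρ • a)
    let LT : Set (En n) :=
      ⋃ γ ∈ {γ : ℝ → En n | IsMinSeg (coneDist n α) γ p q}, γ '' Set.Icc 0 1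
    Nonempty (↥(Metric.sphere (0 : En n) 1) ≃ₜ ↥LT) ∧
    (0 : En n) ∉ LT ∧ Bornology.IsBounded (connectedComponentIn LTᶜ 0) := by
  intro p q LT
  have hπ := Real.pi_pos
  have hs : 0 < Real.sin α := Real.sin_pos_of_pos_of_lt_pi hα.1 (by linarith [hα.2])
  have hs1 : Real.sin α < 1 := by
    have h := Real.sin_lt_sin_of_lt_of_le_pi_div_two (by linarith [hα.1]) le_rfl hα.2
    rwa [Real.sin_pi_div_two] at h
  have ha0 : a ≠ 0 := by rw [← norm_ne_zero_iff, ha]; exact one_ne_zero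
  have hcos : 0 < Real.cos (Real.sin α * (π / 2)) :=
    Real.cos_pos_of_mem_Ioo ⟨by nlinarith, by nlinarith⟩
  have hm : 0 < ρ * Real.cos (Real.sin α * (π / 2)) := by positivity
  have hLT : LT = {z | (develop (Real.sin α) a z).re = ρ * Real.cos (Real.sin α * (π / 2))} :=
    iUnion_minSeg_eq (by omega) hs hs1 hρ ha
  have hf : Continuous fun z : En n => (develop (Real.sin α) a z).re :=
    Complex.continuous_re.comp (continuous_develop _ a ha0)
  have hf0 : (develop (Real.sin α) a (0 : En n)).re = 0 := by rw [develop_zero]; rfl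
  have h0 : (0 : En n) ∉ LT := by
    rw [hLT, mem_ofPred_eq, hf0]
    exact hm.ne
  refine ⟨?_, h0, ?_⟩
  · rw [hLT]
    exact ⟨sphereHomeomorphLevel _ hf
      (fun z hz => (mul_pos (norm_pos_iff.2 hz) hcos).trans_le
        (norm_mul_cos_le_develop_re hs hs1 a z))
      (fun r z hr => develop_re_smul _ a z hr) hf0 _ hm⟩
  · refine (Metric.isBounded_closedBall (x := (0 : En n)) (r := ρ)).subset fun z hz => ?_
    rw [mem_closedBall_zero_iff]
    by_contra! hlt
    have h1 : ρ * Real.cos (Real.sin α * (π / 2)) ≤ (develop (Real.sin α) a z).re :=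
      (mul_le_mul_of_nonneg_right hlt.le hcos.le).trans (norm_mul_cos_le_develop_re hs hs1 a z)
    obtain ⟨w, hw, hwm⟩ := isPreconnected_connectedComponentIn.intermediate_value
      (mem_connectedComponentIn (F := LTᶜ) h0) hz hf.continuousOn
      ⟨by rw [hf0]; exact hm.le, h1⟩
    have hw' : w ∉ LT := connectedComponentIn_subset _ _ hw
    rw [hLT] at hw'
    exact hw' hwm
end

section
/- Let n ≥ 2 and let (M,g) = (ℝ^n, g) with reference point o be an asymptotically conical Riemannian manifold with opening angle α ∈ (0,π/2) and asymptotic decay rate μ > 0, and let d_g denote the induced Riemannian distance. Then lim_{|x|→∞} d_g(o,x)/|x| = 1; equivalently, d_g(o,x)/|x| → 1 as d_g(o,x) → ∞. -/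
/-!
The metric `g` differs from the cone metric by at most `δ ‖v‖²` outside a large ball
(`IsAsympConical.near_cone`), and is bounded by a multiple of the Euclidean metric on the ball
(`IsAsympConical.bounded_on_ball`).

*Upper bound* (`rdist_upper`). The segment `t ↦ t x` is radial, and the cone metric agrees with the
Euclidean one in radial directions, so its length is at most `(1 + δ) ‖x‖` plus a constant for the
part inside the ball.

*Lower bound* (`clen_lower`). For `δ ≤ sin² α`, outside the ball `g(v,v) ≥ (1 - δ) dρ(v)²`. After
the last time a curve from `0` to `x` leaves the ball of radius `R`, its length is therefore at
least `(1 - δ)` times the increase `‖x‖ - R` of the radius.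

Dividing by `‖x‖` gives the first limit. The second follows since `d_g(0, ·)` is bounded on balls,
so that `d_g(0, x) → ∞` forces `‖x‖ → ∞`.
-/

open scoped RealInnerProductSpace
open Real Set Filter

open scoped Topology

/-! ### Pointwise bounds on the metric -/

/-- Expansion of a symmetric bilinear form, given as a function of two vectors, in the standard
basis. -/
lemma bilin_expand {n : ℕ} (B : En n → En n → ℝ) (hs : ∀ v w, B v w = B w v)
    (ha : ∀ v w u, B (v + w) u = B v u + B w u)
    (hm : ∀ (a : ℝ) v u, B (a • v) u = a * B v u) (v : En n) :
    B v v = ∑ i, ∑ j, v i * v j * B (EuclideanSpace.single i 1) (EuclideanSpace.single j 1) := by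
  let L : En n →ₗ[ℝ] En n →ₗ[ℝ] ℝ := LinearMap.mk₂ ℝ B ha hm
    (fun v w u => by rw [hs, ha, hs w, hs u]) (fun a v u => by rw [hs, hm, hs u]; rfl)
  have hL : ∀ v w, B v w = L v w := fun v w => rfl
  have hv : v = ∑ i, v i • EuclideanSpace.single i (1 : ℝ) := by
    simpa using ((EuclideanSpace.basisFun (Fin n) ℝ).sum_repr v).symm
  simp only [hL]
  conv_lhs => rw [hv]
  simp only [map_sum, map_smul, LinearMap.sum_apply, LinearMap.smul_apply, smul_eq_mul,
    Finset.mul_sum]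
  rw [Finset.sum_comm]
  refine Finset.sum_congr rfl fun i _ => Finset.sum_congr rfl fun j _ => by ring

lemma bilin_bound {n : ℕ} (B : En n → En n → ℝ) (hs : ∀ v w, B v w = B w v)
    (ha : ∀ v w u, B (v + w) u = B v u + B w u)
    (hm : ∀ (a : ℝ) v u, B (a • v) u = a * B v u) (v : En n) :
    |B v v| ≤ (∑ i, ∑ j, |B (EuclideanSpace.single i 1) (EuclideanSpace.single j 1)|)
      * ‖v‖ ^ 2 := by
  rw [bilin_expand B hs ha hm v, Finset.sum_mul]
  refine (Finset.abs_sum_le_sum_abs _ _).trans (Finset.sum_le_sum fun i _ => ?_)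
  rw [Finset.sum_mul]
  refine (Finset.abs_sum_le_sum_abs _ _).trans (Finset.sum_le_sum fun j _ => ?_)
  rw [abs_mul, abs_mul, mul_comm, sq]
  have h1 : |v i| ≤ ‖v‖ := PiLp.norm_apply_le v i
  have h2 : |v j| ≤ ‖v‖ := PiLp.norm_apply_le v j
  gcongr

/-- Only the order-zero decay of the components of `g - g_{C_α^n}` enters here. -/
lemma IsAsympConical.near_cone {n : ℕ} {g : MetricTensor n} {α μ : ℝ} (hμ : 0 < μ)
    (hg : IsAsympConical n g α μ) {δ : ℝ} (hδ : 0 < δ) :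
    ∃ R : ℝ, 1 ≤ R ∧ ∀ x : En n, R ≤ ‖x‖ → ∀ v,
      |g x v v - coneMetric n α x v v| ≤ δ * ‖v‖ ^ 2 := by
  let a : Fin n → Fin n → En n → ℝ := fun i j y =>
    g y (EuclideanSpace.single i 1) (EuclideanSpace.single j 1) -
      coneMetric n α y (EuclideanSpace.single i 1) (EuclideanSpace.single j 1)
  have hnorm : Tendsto (fun x : En n => ‖x‖) (comap (fun x : En n => ‖x‖) atTop) atTop :=
    tendsto_comap
  have ht : ∀ i j, Tendsto (fun x => |a i j x|) (comap (fun x : En n => ‖x‖) atTop) (𝓝 0) := by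
    intro i j
    obtain ⟨C, R, hC, h⟩ := hg.decay i j
    have h0 : Tendsto (fun x : En n => C * ‖x‖ ^ (-μ)) (comap (fun x : En n => ‖x‖) atTop)
        (𝓝 0) := by
      simpa using ((tendsto_rpow_neg_atTop hμ).comp hnorm).const_mul C
    refine squeeze_zero' (Eventually.of_forall fun x => abs_nonneg _) ?_ h0
    filter_upwards [hnorm.eventually_ge_atTop R] with x hx
    have := h x hx 0 (by norm_num)
    rw [norm_iteratedFDeriv_zero] at this
    simpa using this
  have hsum : Tendsto (fun x => ∑ i, ∑ j, |a i j x|) (comap (fun x : En n => ‖x‖) atTop)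
      (𝓝 0) := by
    have := tendsto_finsetSum Finset.univ fun i (_ : i ∈ Finset.univ) =>
      tendsto_finsetSum Finset.univ fun j (_ : j ∈ Finset.univ) => ht i j
    simpa using this
  have hev := hsum.eventually_le_const hδ
  rw [eventually_comap] at hev
  obtain ⟨R, hR⟩ := eventually_atTop.1 hev
  refine ⟨max R 1, le_max_right _ _, fun x hx v => ?_⟩
  have hb := bilin_bound (fun v w => g x v w - coneMetric n α x v w)
    (fun v w => by
      simp only [coneMetric]; rw [hg.symm, real_inner_comm v w]; ring)
    (fun v w u => by
      simp only [coneMetric, hg.add_left, inner_add_left]; ring)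
    (fun c v u => by
      simp only [coneMetric, hg.smul_left, real_inner_smul_left]; ring) v
  refine hb.trans ?_
  have := hR ‖x‖ ((le_max_left _ _).trans hx) x rfl
  gcongr

lemma IsAsympConical.bounded_on_ball {n : ℕ} {g : MetricTensor n} {α μ : ℝ}
    (hg : IsAsympConical n g α μ) (R : ℝ) :
    ∃ K : ℝ, 0 ≤ K ∧ ∀ x : En n, ‖x‖ ≤ R → ∀ v, g x v v ≤ K ^ 2 * ‖v‖ ^ 2 := by
  have hc : Continuous (fun x : En n => ∑ i, ∑ j,
      |g x (EuclideanSpace.single i 1) (EuclideanSpace.single j 1)|) :=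
    continuous_finsetSum _ fun i _ => continuous_finsetSum _ fun j _ =>
      (hg.reg i j).continuous.abs
  obtain ⟨M, hM⟩ := (isCompact_closedBall (0 : En n) R).bddAbove_image hc.continuousOn
  refine ⟨√ (max M 0), Real.sqrt_nonneg _, fun x hx v => ?_⟩
  rw [Real.sq_sqrt (le_max_right _ _)]
  refine (le_abs_self _).trans ((bilin_bound (g x) (hg.symm x) (hg.add_left x)
    (hg.smul_left x) v).trans ?_)
  have := hM ⟨x, by simpa using hx, rfl⟩
  have := this.trans (le_max_left M 0)
  gcongr

lemma IsAsympConical.continuous_speed {n : ℕ} {g : MetricTensor n} {α μ : ℝ}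
    (hg : IsAsympConical n g α μ) {γ : ℝ → En n} (hγ : ContDiff ℝ 1 γ) :
    Continuous fun t => √ (g (γ t) (deriv γ t) (deriv γ t)) := by
  have hd : Continuous (deriv γ) := hγ.continuous_deriv le_rfl
  have : (fun t => g (γ t) (deriv γ t) (deriv γ t)) = fun t => ∑ i, ∑ j,
      deriv γ t i * deriv γ t j *
        g (γ t) (EuclideanSpace.single i 1) (EuclideanSpace.single j 1) :=
    funext fun t => bilin_expand (g (γ t)) (hg.symm _) (hg.add_left _) (hg.smul_left _) _
  refine Continuous.sqrt ?_
  rw [this]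
  refine continuous_finsetSum _ fun i _ => continuous_finsetSum _ fun j _ => ?_
  have h := (hg.reg i j).continuous.comp hγ.continuous
  have hi : ∀ i, Continuous fun t => deriv γ t i := fun i => by fun_prop
  exact ((hi i).mul (hi j)).mul h

/-! ### Upper bound along radial segments -/

lemma clen_nonneg {n : ℕ} (g : MetricTensor n) (γ : ℝ → En n) : 0 ≤ clen g γ 0 1 :=
  intervalIntegral.integral_nonneg zero_le_one fun _ _ => Real.sqrt_nonneg _

/-- The distance from the origin is at most the length of the straight segment. -/
lemma rdist_le_segment {n : ℕ} (g : MetricTensor n) (x : En n) :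
    rdist g 0 x ≤ ∫ t in (0:ℝ)..1, √ (g (t • x) x x) := by
  refine csInf_le ⟨0, ?_⟩ ⟨fun t => t • x, by fun_prop, by simp, by simp, ?_⟩
  · rintro L ⟨γ, -, -, -, rfl⟩
    exact clen_nonneg g γ
  · have : ∀ t : ℝ, deriv (fun t : ℝ => t • x) t = x := fun t => by
      simpa using ((hasDerivAt_id t).smul_const x).deriv
    simp only [clen, this]

/-- On a ball the distance from the origin is bounded. -/
lemma IsAsympConical.rdist_bounded {n : ℕ} {g : MetricTensor n} {α μ : ℝ}
    (hg : IsAsympConical n g α μ) (R : ℝ) :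
    ∃ B : ℝ, ∀ x : En n, ‖x‖ ≤ R → rdist g 0 x ≤ B := by
  obtain ⟨K, hK, h⟩ := hg.bounded_on_ball R
  refine ⟨K * R, fun x hx => (rdist_le_segment g x).trans ?_⟩
  have := intervalIntegral.norm_integral_le_of_norm_le_const (a := 0) (b := 1)
    (f := fun t : ℝ => √ (g (t • x) x x)) (C := K * R) ?_
  · simpa using (le_abs_self _).trans this
  · intro t ht
    rw [uIoc_of_le zero_le_one] at ht
    rw [Real.norm_of_nonneg (Real.sqrt_nonneg _)]
    have h1 : ‖t • x‖ ≤ R := by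
      rw [norm_smul, Real.norm_of_nonneg ht.1.le]
      exact (mul_le_of_le_one_left (norm_nonneg _) ht.2).trans hx
    calc √ (g (t • x) x x) ≤ √ ((K * ‖x‖) ^ 2) := Real.sqrt_le_sqrt (by
          rw [mul_pow]; exact h _ h1 x)
      _ = K * ‖x‖ := Real.sqrt_sq (by positivity)
      _ ≤ K * R := by gcongr

lemma rdist_upper {n : ℕ} {g : MetricTensor n} {α μ : ℝ}
    (hg : IsAsympConical n g α μ) {δ R : ℝ} (hδ : 0 < δ) (hR : 1 ≤ R)
    (hnear : ∀ x : En n, R ≤ ‖x‖ → ∀ v, |g x v v - coneMetric n α x v v| ≤ δ * ‖v‖ ^ 2) :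
    ∃ B : ℝ, ∀ x : En n, R ≤ ‖x‖ → rdist g 0 x ≤ (1 + δ) * ‖x‖ + B := by
  obtain ⟨K, hK, h⟩ := hg.bounded_on_ball R
  refine ⟨K * R, fun x hx => (rdist_le_segment g x).trans ?_⟩
  have hx0 : 0 < ‖x‖ := by linarith
  have hcont : Continuous fun t : ℝ => √ (g (t • x) x x) := by
    have h1 := hg.continuous_speed (γ := fun t : ℝ => t • x) (by fun_prop)
    have : ∀ t : ℝ, deriv (fun t : ℝ => t • x) t = x := fun t => by
      simpa using ((hasDerivAt_id t).smul_const x).deriv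
    simpa only [this] using h1
  -- the segment leaves the ball at time `s`
  set s : ℝ := R / ‖x‖ with hs
  have hs0 : 0 < s := by positivity
  have hs1 : s ≤ 1 := (div_le_one hx0).2 hx
  have hsx : s * ‖x‖ = R := div_mul_cancel₀ _ hx0.ne'
  rw [← intervalIntegral.integral_add_adjacent_intervals
    (hcont.intervalIntegrable 0 s) (hcont.intervalIntegrable s 1)]
  have b1 : ∫ t in (0:ℝ)..s, √ (g (t • x) x x) ≤ K * R := by
    have := intervalIntegral.norm_integral_le_of_norm_le_const (a := 0) (b := s)
      (f := fun t : ℝ => √ (g (t • x) x x)) (C := K * ‖x‖) ?_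
    · refine ((le_abs_self _).trans this).trans_eq ?_
      rw [sub_zero, abs_of_pos hs0, mul_assoc, mul_comm ‖x‖, hsx]
    · intro t ht
      rw [uIoc_of_le hs0.le] at ht
      rw [Real.norm_of_nonneg (Real.sqrt_nonneg _)]
      have h1 : ‖t • x‖ ≤ R := by
        rw [norm_smul, Real.norm_of_nonneg ht.1.le, ← hsx]
        exact mul_le_mul_of_nonneg_right ht.2 hx0.le
      calc √ (g (t • x) x x) ≤ √ ((K * ‖x‖) ^ 2) := Real.sqrt_le_sqrt (by
            rw [mul_pow]; exact h _ h1 x)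
        _ = K * ‖x‖ := Real.sqrt_sq (by positivity)
  have b2 : ∫ t in s..1, √ (g (t • x) x x) ≤ (1 + δ) * ‖x‖ := by
    have := intervalIntegral.norm_integral_le_of_norm_le_const (a := s) (b := 1)
      (f := fun t : ℝ => √ (g (t • x) x x)) (C := (1 + δ) * ‖x‖) ?_
    · refine ((le_abs_self _).trans this).trans ?_
      rw [abs_of_nonneg (by linarith)]
      exact mul_le_of_le_one_right (by positivity) (by linarith)
    · intro t ht
      rw [uIoc_of_le hs1] at ht
      have ht0 : 0 < t := hs0.trans ht.1
      rw [Real.norm_of_nonneg (Real.sqrt_nonneg _)]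
      have h1 : R ≤ ‖t • x‖ := by
        rw [norm_smul, Real.norm_of_nonneg ht0.le, ← hsx]
        exact mul_le_mul_of_nonneg_right ht.1.le hx0.le
      have hcone : coneMetric n α (t • x) x x = ‖x‖ ^ 2 := by
        simp only [coneMetric, real_inner_smul_right, real_inner_self_eq_norm_sq, norm_smul,
          Real.norm_of_nonneg ht0.le]
        field_simp
        ring
      have h2 := (abs_le.1 (hnear _ h1 x)).2
      rw [hcone] at h2
      calc √ (g (t • x) x x) ≤ √ (((1 + δ) * ‖x‖) ^ 2) := Real.sqrt_le_sqrt (by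
            have : 0 ≤ (δ + δ ^ 2) * ‖x‖ ^ 2 := by positivity
            nlinarith)
        _ = (1 + δ) * ‖x‖ := Real.sqrt_sq (by positivity)
  linarith

/-! ### Lower bound from the radial speed -/

/-- Outside the ball the `g`-speed controls the radial speed. -/
lemma radial_le {n : ℕ} {g : MetricTensor n} {α δ R : ℝ} (hδ1 : δ ≤ 1)
    (hδα : δ ≤ Real.sin α ^ 2) (hR : 1 ≤ R)
    (hnear : ∀ x : En n, R ≤ ‖x‖ → ∀ v, |g x v v - coneMetric n α x v v| ≤ δ * ‖v‖ ^ 2)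
    (hδ : 0 < δ) {y : En n} (hy : R ≤ ‖y‖) (v : En n) :
    (1 - δ) * (⟪y, v⟫ / ‖y‖) ≤ √ (g y v v) := by
  have hy0 : 0 < ‖y‖ := by linarith
  apply Real.le_sqrt_of_sq_le
  have h := (abs_le.1 (hnear y hy v)).1
  set p : ℝ := ⟪y, v⟫ / ‖y‖ with hp
  have hcone : coneMetric n α y v v = (1 - Real.sin α ^ 2) * p ^ 2 + Real.sin α ^ 2 * ‖v‖ ^ 2 := by
    simp only [coneMetric, real_inner_self_eq_norm_sq, real_inner_comm y v, hp]
    ring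
  have hpv : p ^ 2 ≤ ‖v‖ ^ 2 := by
    rw [hp, sq_le_sq, abs_div, abs_norm, abs_norm, div_le_iff₀ hy0, mul_comm]
    exact abs_real_inner_le_norm y v
  rw [hcone] at h
  have h1 : 0 ≤ (Real.sin α ^ 2 - δ) * (‖v‖ ^ 2 - p ^ 2) :=
    mul_nonneg (by linarith) (by linarith)
  have h2 : 0 ≤ δ * (1 - δ) * p ^ 2 :=
    mul_nonneg (mul_nonneg hδ.le (by linarith)) (sq_nonneg p)
  nlinarith

lemma clen_lower {n : ℕ} {g : MetricTensor n} {α μ : ℝ}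
    (hg : IsAsympConical n g α μ) {δ R : ℝ} (hδ : 0 < δ) (hδ1 : δ ≤ 1)
    (hδα : δ ≤ Real.sin α ^ 2) (hR : 1 ≤ R)
    (hnear : ∀ x : En n, R ≤ ‖x‖ → ∀ v, |g x v v - coneMetric n α x v v| ≤ δ * ‖v‖ ^ 2)
    {γ : ℝ → En n} (hγ : ContDiff ℝ 1 γ) (h0 : γ 0 = 0) :
    (1 - δ) * (‖γ 1‖ - R) ≤ clen g γ 0 1 := by
  have hcont := hg.continuous_speed hγ
  -- the last time in `[0,1]` at which the curve is in the ball
  have hcpt : IsCompact (Icc (0:ℝ) 1 ∩ {t | ‖γ t‖ ≤ R}) :=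
    isCompact_Icc.inter_right (isClosed_le hγ.continuous.norm continuous_const)
  obtain ⟨s, ⟨hs, hsR⟩, hmax⟩ := hcpt.exists_isGreatest
    ⟨0, ⟨le_rfl, zero_le_one⟩, by simp [h0]; linarith⟩
  have hsR : ‖γ s‖ ≤ R := hsR
  have hout : ∀ t ∈ Ioo s 1, R ≤ ‖γ t‖ := fun t ht => by
    by_contra hlt
    exact absurd (hmax ⟨⟨hs.1.trans ht.1.le, ht.2.le⟩, (not_le.1 hlt).le⟩) (not_le.2 ht.1)
  have key := intervalIntegral.sub_le_integral_of_hasDeriv_right_of_le (a := s) (b := 1)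
    (g := fun t => (1 - δ) * ‖γ t‖) (g' := fun t => (1 - δ) * (⟪γ t, deriv γ t⟫ / ‖γ t‖))
    (φ := fun t => √ (g (γ t) (deriv γ t) (deriv γ t))) hs.2
    (by have := hγ.continuous; fun_prop) (fun t ht => ?_)
    (hcont.integrableOn_Icc) (fun t ht => radial_le hδ1 hδα hR hnear hδ (hout t ht) _)
  · have hsplit := intervalIntegral.integral_add_adjacent_intervals
      (hcont.intervalIntegrable 0 s) (hcont.intervalIntegrable s 1) (μ := MeasureTheory.volume)
    have hnn : 0 ≤ ∫ t in (0:ℝ)..s, √ (g (γ t) (deriv γ t) (deriv γ t)) :=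
      intervalIntegral.integral_nonneg hs.1 fun _ _ => Real.sqrt_nonneg _
    rw [clen, ← hsplit]
    have : (1 - δ) * ‖γ s‖ ≤ (1 - δ) * R := mul_le_mul_of_nonneg_left hsR (by linarith)
    linarith
  · have hpos : 0 < ‖γ t‖ := by linarith [hout t ht]
    have hd : HasDerivAt γ (deriv γ t) t := (hγ.differentiable one_ne_zero t).hasDerivAt
    have hsq := (hd.norm_sq.sqrt (by positivity)).const_mul (1 - δ)
    simp only [Real.sqrt_sq (norm_nonneg _)] at hsq
    refine (hsq.congr_deriv ?_).hasDerivWithinAt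
    field_simp

lemma rdist_lower {n : ℕ} {g : MetricTensor n} {α μ : ℝ}
    (hg : IsAsympConical n g α μ) {δ R : ℝ} (hδ : 0 < δ) (hδ1 : δ ≤ 1)
    (hδα : δ ≤ Real.sin α ^ 2) (hR : 1 ≤ R)
    (hnear : ∀ x : En n, R ≤ ‖x‖ → ∀ v, |g x v v - coneMetric n α x v v| ≤ δ * ‖v‖ ^ 2)
    (x : En n) : (1 - δ) * (‖x‖ - R) ≤ rdist g 0 x := by
  refine le_csInf ⟨_, fun t => t • x, by fun_prop, by simp, by simp, rfl⟩ ?_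
  rintro L ⟨γ, hγ, h0, h1, rfl⟩
  rw [← h1]
  exact clen_lower hg hδ hδ1 hδα hR hnear hγ h0

/-- asymptotics of the Riemannian distance to the reference point.
On an asymptotically conical manifold `(ℝⁿ, g)`, `d_g(o,x)/|x| → 1` as `|x| → ∞`;
equivalently `d_g(o,x)/|x| → 1` as `d_g(o,x) → ∞`. -/
theorem statement_10 (n : ℕ) (hn : 2 ≤ n) (g : MetricTensor n) (α μ : ℝ)
    (hα : α ∈ Set.Ioo 0 (π / 2)) (hμ : 0 < μ) (hg : IsAsympConical n g α μ) :
    (∀ ε > (0:ℝ), ∃ R : ℝ, ∀ x : En n, R ≤ ‖x‖ → |rdist g 0 x / ‖x‖ - 1| < ε) ∧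
    (∀ ε > (0:ℝ), ∃ R : ℝ, ∀ x : En n, R ≤ rdist g 0 x → |rdist g 0 x / ‖x‖ - 1| < ε) := by
  have part1 : ∀ ε > (0:ℝ), ∃ R : ℝ, ∀ x : En n, R ≤ ‖x‖ → |rdist g 0 x / ‖x‖ - 1| < ε := by
    intro ε hε
    have hsin : 0 < Real.sin α := Real.sin_pos_of_pos_of_lt_pi hα.1 (by linarith [hα.2, pi_pos])
    set δ : ℝ := min (ε / 2) (min 1 (Real.sin α ^ 2)) with hδdef
    have hδ : 0 < δ := lt_min (by linarith) (lt_min one_pos (by positivity))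
    have hδε : δ ≤ ε / 2 := min_le_left _ _
    have hδ1 : δ ≤ 1 := (min_le_right _ _).trans (min_le_left _ _)
    have hδα : δ ≤ Real.sin α ^ 2 := (min_le_right _ _).trans (min_le_right _ _)
    obtain ⟨R, hR, hnear⟩ := hg.near_cone hμ hδ
    obtain ⟨B, hB⟩ := rdist_upper hg hδ hR hnear
    refine ⟨max R (2 * (|B| + R) / ε + 1), fun x hx => ?_⟩
    have hxR : R ≤ ‖x‖ := (le_max_left _ _).trans hx
    have hx0 : 0 < ‖x‖ := by linarith
    have hbig : |B| + R < ε / 2 * ‖x‖ := by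
      have : 2 * (|B| + R) / ε < ‖x‖ := by linarith [(le_max_right _ _).trans hx]
      rw [div_lt_iff₀ hε] at this
      linarith
    have hup := hB x hxR
    have hlo := rdist_lower hg hδ hδ1 hδα hR hnear x
    have hδx : δ * ‖x‖ ≤ ε / 2 * ‖x‖ := mul_le_mul_of_nonneg_right hδε hx0.le
    have hδR : 0 < δ * R := by positivity
    have hBa := le_abs_self B
    have hBn := abs_nonneg B
    rw [div_sub_one hx0.ne', abs_div, abs_norm, div_lt_iff₀ hx0, abs_lt]
    constructor <;> nlinarith
  refine ⟨part1, fun ε hε => ?_⟩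
  obtain ⟨R, hR⟩ := part1 ε hε
  obtain ⟨B, hB⟩ := hg.rdist_bounded R
  refine ⟨B + 1, fun x hx => hR x ?_⟩
  by_contra hlt
  linarith [hB x (not_le.1 hlt).le]
end
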